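/- Let A ⊆ ℤ^d be a finite pointed set of lattice vectors with ℤA = ℤ^d, and let F be a prime face of A (the zero set in A of an integral linear functional that is nonnegative on A). If the simplicial volume of F in the lattice ℤF equals the simplicial volume of A in ℤ^d, then A is an iterated pyramid over F: there is a chain of prime faces F = F_0 ⊆ F_1 ⊆ … ⊆ F_t = A with |F_{i+1} ∖ F_i| = 1 and rank(ℤF_{i+1}) = rank(ℤF_i) + 1 for all i. -/

import Mathlib

open MeasureTheory

/-- Simplicial volume of a finite subset of `ℤ^d`, computed in the lattice it spans. -/
noncomputable def simpVol {d : ℕ} (G : Finset (Fin d → ℤ)) : ℝ :=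
  haveI : Module.Finite ℤ (Submodule.span ℤ ((G : Set (Fin d → ℤ)))) :=
    Module.Finite.span_of_finite ℤ G.finite_toSet
  let L : Submodule ℤ (Fin d → ℤ) := Submodule.span ℤ ((G : Set (Fin d → ℤ)))
  let b := Module.Free.chooseBasis ℤ L
  let coord : (Fin d → ℤ) → (Module.Free.ChooseBasisIndex ℤ L → ℝ) :=
    fun v => haveI := Classical.dec (v ∈ L)
      if h : v ∈ L then (fun i => ((b.repr ⟨v, h⟩) i : ℝ)) else 0
  (Nat.factorial (Module.finrank ℤ L)) *
    (volume (convexHull ℝ (coord '' (insert (0 : Fin d → ℤ) (G : Set (Fin d → ℤ)))))).toReal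

/-- `F` is a prime face of `A`: the zero set in `A` of an integral linear functional
that is nonnegative on `A`. -/
def IsPrimeFace {d : ℕ} (A F : Finset (Fin d → ℤ)) : Prop :=
  F ⊆ A ∧ ∃ L : (Fin d → ℤ) →ₗ[ℤ] ℤ, (∀ a ∈ A, 0 ≤ L a) ∧ ∀ a ∈ A, (a ∈ F ↔ L a = 0)

/-!
Complete a basis of `ℤF` to a maximal linearly independent family by points `a₁, …, a_k` of `A`,
where `k = rank ℤA - rank ℤF`. The integral linear map `T` sending the unit vectors to this family
carries the `k`-fold pyramid `J` over `conv (F ∪ {0})` whose apexes are unit vectors into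
`conv (A ∪ {0})`, and by Fubini `J` has the same normalized volume as its base. Since `|det T|` is
a positive integer, equality of the two volumes forces `|det T| = 1` and `T J = conv (A ∪ {0})`.
Thus the family is a basis of `ℤA` in which every point of `A` is an integral point of `J`, and the
only integral points of `J` off the base hyperplane are the apexes. Hence `A = F ∪ {a₁, …, a_k}`,
and sums of the coordinates dual to the apexes cut out the faces of the chain.
-/

open Module Set Function
open scoped ENNReal Nat Pointwise

section Algebra

variable {R M : Type*} [CommRing R] [IsDomain R] [AddCommGroup M] [Module R M]

lemma exists_linearIndependent_of_span_eq_top [Module.Finite R M] {ι : Type*} {v : ι → M}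
    (hv : Submodule.span R (range v) = ⊤) :
    ∃ a : Fin (finrank R M) → ι, LinearIndependent R (v ∘ a) := by
  let K := FractionRing R
  let f := LocalizedModule.mkLinearMap (nonZeroDivisors R) M
  obtain ⟨κ, a, -, hspan, hli⟩ := exists_linearIndependent' K (f ∘ v)
  have hspan_top : Submodule.span K (range ((f ∘ v) ∘ a)) = ⊤ := by
    rw [hspan, range_comp]
    exact span_eq_top_of_isLocalizedModule K (nonZeroDivisors R) f hv
  have hva : LinearIndependent R (v ∘ a) :=
    .of_comp f ((LinearIndependent.iff_fractionRing R K).mpr hli)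
  have : Finite κ := hva.finite
  have hcard : Nat.card κ = finrank R M := by
    rw [← finrank_eq_nat_card_basis (Basis.mk hli hspan_top.ge), IsFractionRing.finrank_right_eq R,
      IsLocalizedModule.finrank_eq (nonZeroDivisors R) f le_rfl]
  exact ⟨a ∘ (Finite.equivFinOfCardEq hcard).symm, hva.comp _ (Equiv.injective _)⟩

lemma exists_linearIndependent_sumElim_of_span_eq_top [Module.Finite R M] {ι κ : Type*}
    [Fintype ι] {w : ι → M} (hw : LinearIndependent R w) {v : κ → M}
    (hv : Submodule.span R (range v) = ⊤) :
    ∃ (k : ℕ) (a : Fin k → κ),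
      Fintype.card ι + k = finrank R M ∧ LinearIndependent R (Sum.elim w (v ∘ a)) := by
  let W := Submodule.span R (range w)
  have hquot : Submodule.span R (range (W.mkQ ∘ v)) = ⊤ := by
    rw [range_comp, Submodule.span_image, hv, Submodule.map_top, Submodule.range_mkQ]
  obtain ⟨a, ha⟩ := exists_linearIndependent_of_span_eq_top hquot
  refine ⟨_, a, ?_, (linearIndependent_span hw).sumElim_of_quotient _ ha⟩
  rw [← finrank_span_eq_card hw, add_comm, Submodule.finrank_quotient_add_finrank]

lemma finrank_span_insert_of_apply_ne_zero [Module.Finite R M] [IsNoetherianRing R]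
    {G : Set M} {a : M} (f : M →ₗ[R] R) (hG : ∀ g ∈ G, f g = 0) (ha : f a ≠ 0) :
    finrank R (Submodule.span R (insert a G)) = finrank R (Submodule.span R G) + 1 := by
  have hker : Submodule.span R G ≤ LinearMap.ker f := Submodule.span_le.mpr hG
  have hdisj : Submodule.span R {a} ⊓ Submodule.span R G = ⊥ := by
    rw [Submodule.eq_bot_iff]
    rintro _ ⟨hx, hxG⟩
    obtain ⟨c, rfl⟩ := Submodule.mem_span_singleton.mp hx
    have hfx : f (c • a) = 0 := hker hxG
    rw [map_smul, smul_eq_mul, mul_eq_zero_iff_right ha] at hfx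
    rw [hfx, zero_smul]
  have ha_indep : LinearIndependent R (fun _ : Unit => a) :=
    .of_comp f (by simpa using ha)
  have hsingle : finrank R (Submodule.span R {a}) = 1 := by
    rw [← Fintype.card_unit, ← finrank_span_eq_card ha_indep, Set.range_const]
  have hrank := Submodule.rank_sup_add_rank_inf_eq (Submodule.span R {a}) (Submodule.span R G)
  rw [hdisj, ← Submodule.span_insert, rank_bot, add_zero] at hrank
  simp only [← finrank_eq_rank, hsingle] at hrank
  norm_cast at hrank
  rw [hrank, add_comm]

lemma exists_extend_smul [IsPrincipalIdealRing R] [Module.Free R M]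
    [Module.Finite R M] {E : Type*} [AddCommGroup E] [Module R E] (N : Submodule R M)
    (f : N →ₗ[R] E) :
    ∃ c : R, c ≠ 0 ∧ ∃ g : M →ₗ[R] E, ∀ x : N, g x = c • f x := by
  classical
  obtain ⟨n, s⟩ := N.smithNormalForm (Free.chooseBasis R M)
  let g : M →ₗ[R] E := s.bM.constr R
    (extend s.f (fun i => (∏ j ∈ Finset.univ.erase i, s.a j) • f (s.bN i)) 0)
  have hg : g ∘ₗ N.subtype = (∏ j, s.a j) • f := s.bN.ext fun i => by
    rw [LinearMap.comp_apply, N.subtype_apply, s.snf, map_smul, s.bM.constr_basis,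
      s.f.injective.extend_apply, smul_smul, Finset.mul_prod_erase _ _ (Finset.mem_univ i),
      LinearMap.smul_apply]
  have ha : ∀ i, s.a i ≠ 0 := fun i h => s.bN.ne_zero i <| by
    rw [← Submodule.coe_eq_zero, s.snf, h, zero_smul]
  exact ⟨∏ j, s.a j, Finset.prod_ne_zero_iff.mpr fun i _ => ha i, g, LinearMap.congr_fun hg⟩

lemma basis_det_ne_zero_of_linearIndependent {n : Type*} [Fintype n] [DecidableEq n]
    (b : Basis n R M) {g : n → M} (hg : LinearIndependent R g) : b.det g ≠ 0 := by
  rw [b.det_apply]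
  intro h
  obtain ⟨z, hz, hmul⟩ := Matrix.exists_mulVec_eq_zero_iff.mpr h
  have hsum : ∑ i, z i • g i = 0 := b.equivFun.injective <| by
    rw [map_zero, ← hmul]
    ext i
    simp [Matrix.mulVec, dotProduct, Basis.toMatrix_apply, mul_comm]
  exact hz (funext (Fintype.linearIndependent_iff.mp hg z hsum))

end Algebra

section Pyramid

/-- The corner simplex in `ℝ^κ`: the convex hull of `0` and the unit vectors. -/
def cornerSimplex (κ : Type*) [Fintype κ] : Set (κ → ℝ) :=
  {y | (∀ i, 0 ≤ y i) ∧ ∑ i, y i ≤ 1}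

lemma mem_cornerSimplex {κ : Type*} [Fintype κ] {y : κ → ℝ} :
    y ∈ cornerSimplex κ ↔ (∀ i, 0 ≤ y i) ∧ ∑ i, y i ≤ 1 := Iff.rfl

lemma isCompact_cornerSimplex (κ : Type*) [Fintype κ] : IsCompact (cornerSimplex κ) := by
  have hclosed : IsClosed (Ici 0 ∩ {y : κ → ℝ | ∑ i, y i ≤ 1}) :=
    isClosed_Ici.inter (isClosed_le (by fun_prop) continuous_const)
  refine (isCompact_Icc (a := 0) (b := 1)).of_isClosed_subset hclosed fun y hy =>
    ⟨hy.1, fun i => ?_⟩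
  exact (Finset.single_le_sum (fun j _ => hy.1 j) (Finset.mem_univ i)).trans hy.2

lemma cons_mem_cornerSimplex {k : ℕ} {t : ℝ} {y : Fin k → ℝ} :
    (Fin.cons t y : Fin (k + 1) → ℝ) ∈ cornerSimplex (Fin (k + 1)) ↔
      y ∈ cornerSimplex (Fin k) ∧ t ∈ Icc 0 (1 - ∑ i, y i) := by
  simp only [mem_cornerSimplex, Fin.forall_fin_succ, Fin.cons_zero,
    Fin.cons_succ, Fin.sum_univ_succ, mem_Icc]
  constructor
  · rintro ⟨⟨ht, hy⟩, hsum⟩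
    exact ⟨⟨hy, by linarith⟩, ht, by linarith⟩
  · rintro ⟨⟨hy, -⟩, ht, hsum⟩
    exact ⟨⟨ht, hy⟩, by linarith⟩

lemma lintegral_Icc_sub_pow {c : ℝ} (hc : 0 ≤ c) (r : ℕ) :
    (r + 1) * ∫⁻ t in Icc 0 c, ENNReal.ofReal ((c - t) ^ r) = ENNReal.ofReal (c ^ (r + 1)) := by
  have hint : ∫ t in Icc 0 c, (c - t) ^ r = c ^ (r + 1) / (r + 1) := by
    rw [integral_Icc_eq_integral_Ioc, ← intervalIntegral.integral_of_le hc,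
      intervalIntegral.integral_comp_sub_left (fun t => t ^ r) c]
    simp
  have hnonneg : 0 ≤ᵐ[volume.restrict (Icc 0 c)] fun t => (c - t) ^ r := by
    filter_upwards [ae_restrict_mem measurableSet_Icc] with t ht
    exact pow_nonneg (sub_nonneg.mpr ht.2) _
  have hcont : IntegrableOn (fun t => (c - t) ^ r) (Icc 0 c) :=
    ContinuousOn.integrableOn_Icc (by fun_prop)
  rw [← ofReal_integral_eq_lintegral_ofReal hcont hnonneg, hint]
  have hr : ((r : ℝ≥0∞) + 1) = ENNReal.ofReal (r + 1) := by
    rw [ENNReal.ofReal_add r.cast_nonneg zero_le_one, ENNReal.ofReal_natCast, ENNReal.ofReal_one]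
  rw [hr, ← ENNReal.ofReal_mul (by positivity), mul_div_cancel₀ _ (by positivity)]

lemma lintegral_cornerSimplex_succ (k r : ℕ) :
    (r + 1) * ∫⁻ y in cornerSimplex (Fin (k + 1)), ENNReal.ofReal ((1 - ∑ i, y i) ^ r) =
      ∫⁻ y in cornerSimplex (Fin k), ENNReal.ofReal ((1 - ∑ i, y i) ^ (r + 1)) := by
  have hmeas (k : ℕ) := (isCompact_cornerSimplex (Fin k)).measurableSet
  let e := MeasurableEquiv.piFinSuccAbove (fun _ : Fin (k + 1) => ℝ) 0
  have he : ∀ p : ℝ × (Fin k → ℝ), e.symm p = Fin.cons p.1 p.2 := fun p => by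
    simp [e, MeasurableEquiv.piFinSuccAbove, Fin.insertNthEquiv]
  have hvol := (volume_preserving_piFinSuccAbove (fun _ : Fin (k + 1) => ℝ) 0).symm
  have hslice : ∀ (t : ℝ) (y : Fin k → ℝ),
      (cornerSimplex (Fin (k + 1))).indicator (fun y => ENNReal.ofReal ((1 - ∑ i, y i) ^ r))
        (Fin.cons t y) =
      (cornerSimplex (Fin k)).indicator (fun y => (Icc 0 (1 - ∑ i, y i)).indicator
        (fun t => ENNReal.ofReal ((1 - ∑ i, y i - t) ^ r)) t) y := fun t y => by
    classical
    simp only [indicator_apply, cons_mem_cornerSimplex, Fin.sum_univ_succ, Fin.cons_zero,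
      Fin.cons_succ, ite_and, sub_add_eq_sub_sub_swap]
  rw [← lintegral_indicator (hmeas _), ← hvol.lintegral_comp_emb e.symm.measurableEmbedding,
    Measure.volume_eq_prod, lintegral_prod_symm',
    ← lintegral_const_mul' _ _ (by finiteness), ← lintegral_indicator (hmeas k)]
  · refine lintegral_congr fun y => ?_
    simp only [e, he, hslice]
    by_cases hy : y ∈ cornerSimplex (Fin k)
    · simp only [indicator_of_mem hy]
      rw [lintegral_indicator measurableSet_Icc, lintegral_Icc_sub_pow (sub_nonneg.mpr hy.2)]
    · simp only [indicator_of_notMem hy, lintegral_zero, mul_zero]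
  · exact (Measurable.indicator (by fun_prop) (hmeas _)).comp e.symm.measurable

lemma lintegral_cornerSimplex (k r : ℕ) :
    (r + k)! * ∫⁻ y in cornerSimplex (Fin k), ENNReal.ofReal ((1 - ∑ i, y i) ^ r) = r ! := by
  induction k generalizing r with
  | zero =>
    have huniv : cornerSimplex (Fin 0) = univ := by ext; simp [cornerSimplex]
    simp [huniv, lintegral_unique, volume_pi]
  | succ k ih =>
    have hcancel : ((r : ℝ≥0∞) + 1) ≠ 0 := by positivity
    rw [← ENNReal.mul_right_inj hcancel (by finiteness), mul_left_comm,
      lintegral_cornerSimplex_succ, ← add_assoc, add_right_comm, ih,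
      Nat.factorial_succ, Nat.cast_mul, Nat.cast_succ]

variable {ι κ : Type*} [Fintype κ]

/-- The solid `|κ|`-fold pyramid in `ℝ^(ι ⊕ κ)` over the base `C × 0`, with the unit vectors of `κ`
as apexes, described by its slices: over a point `y` of the corner simplex lies
`(1 - ∑ i, y i) • C`. For convex nonempty `C` this is the convex hull of the base and the apexes. -/
def iteratedPyramid (κ : Type*) [Fintype κ] (C : Set (ι → ℝ)) : Set (ι ⊕ κ → ℝ) :=
  {z | z ∘ Sum.inr ∈ cornerSimplex κ ∧ z ∘ Sum.inl ∈ (1 - ∑ i, z (Sum.inr i)) • C}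

lemma isCompact_iteratedPyramid {C : Set (ι → ℝ)} (hC : IsCompact C) :
    IsCompact (iteratedPyramid κ C) := by
  have himage : iteratedPyramid κ C =
      (fun p : (ι → ℝ) × (κ → ℝ) => Sum.elim ((1 - ∑ i, p.2 i) • p.1) p.2) ''
        C ×ˢ cornerSimplex κ := by
    ext z
    constructor
    · rintro ⟨hy, x, hx, hxz⟩
      exact ⟨(x, z ∘ Sum.inr), ⟨hx, hy⟩, by simpa [← hxz] using Sum.elim_comp_inl_inr z⟩
    · rintro ⟨⟨x, y⟩, ⟨hx, hy⟩, rfl⟩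
      exact ⟨hy, x, hx, rfl⟩
  rw [himage]
  refine (hC.prod (isCompact_cornerSimplex κ)).image (continuous_pi ?_)
  rintro (i | i) <;> simp only [Sum.elim_inl, Sum.elim_inr, Pi.smul_apply] <;> fun_prop

lemma iteratedPyramid_subset {C : Set (ι → ℝ)} {S : Set (ι ⊕ κ → ℝ)} [DecidableEq ι] [DecidableEq κ]
    (hS : Convex ℝ S) (hC : ∀ x ∈ C, Sum.elim x 0 ∈ S)
    (hapex : ∀ i, Pi.single (Sum.inr i) 1 ∈ S) : iteratedPyramid κ C ⊆ S := by
  rintro z ⟨⟨hy, hsum⟩, x, hx, hxz⟩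
  let w : Option κ → ℝ := fun j => j.elim (1 - ∑ i, z (Sum.inr i)) (z ∘ Sum.inr)
  let p : Option κ → ι ⊕ κ → ℝ := fun j => j.elim (Sum.elim x 0) fun i => Pi.single (Sum.inr i) 1
  have hz : ∑ j, w j • p j = z := by
    rw [Fintype.sum_option]
    ext (i | i)
    · simpa [w, p] using congrFun hxz i
    · simp [w, p, Pi.single_apply]
  rw [← hz]
  refine hS.sum_mem ?_ (by simp [w, Fintype.sum_option]) ?_
  · rintro (_ | i) -
    exacts [sub_nonneg.mpr hsum, hy i]
  · rintro (_ | i) -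
    exacts [hC x hx, hapex i]

lemma volume_iteratedPyramid [Fintype ι] {k : ℕ} {C : Set (ι → ℝ)} (hC : IsCompact C) :
    (Fintype.card (ι ⊕ Fin k))! * volume (iteratedPyramid (Fin k) C) =
      (Fintype.card ι)! * volume C := by
  let e := (MeasurableEquiv.sumPiEquivProdPi (fun _ : ι ⊕ Fin k => ℝ)).symm
  have he := volume_measurePreserving_sumPiEquivProdPi_symm (fun _ : ι ⊕ Fin k => ℝ)
  have hslice (y : Fin k → ℝ) : volume ((·, y) ⁻¹' (e ⁻¹' iteratedPyramid (Fin k) C)) =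
      (cornerSimplex (Fin k)).indicator
        (fun y => ENNReal.ofReal ((1 - ∑ i, y i) ^ Fintype.card ι) * volume C) y := by
    by_cases hy : y ∈ cornerSimplex (Fin k)
    · have hset : (·, y) ⁻¹' (e ⁻¹' iteratedPyramid (Fin k) C) = (1 - ∑ i, y i) • C := by
        ext x; exact and_iff_right hy
      rw [hset, indicator_of_mem hy, Measure.addHaar_smul, finrank_fintype_fun_eq_card,
        abs_of_nonneg (pow_nonneg (sub_nonneg.mpr hy.2) _)]
    · have hset : (·, y) ⁻¹' (e ⁻¹' iteratedPyramid (Fin k) C) = ∅ :=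
        eq_empty_of_forall_notMem fun x hx => hy hx.1
      rw [hset, indicator_of_notMem hy, measure_empty]
  rw [← he.measure_preimage_equiv, Measure.volume_eq_prod, Measure.prod_apply_symm
    (e.measurable (isCompact_iteratedPyramid hC).measurableSet)]
  simp only [e, hslice]
  rw [lintegral_indicator (isCompact_cornerSimplex _).measurableSet,
    lintegral_mul_const _ (by fun_prop), ← mul_assoc, Fintype.card_sum, Fintype.card_fin,
    lintegral_cornerSimplex]

lemma eq_zero_or_eq_single_of_intCast_mem_cornerSimplex [DecidableEq κ] {y : κ → ℤ}
    (hy : (Int.cast ∘ y : κ → ℝ) ∈ cornerSimplex κ) : y = 0 ∨ ∃ i, y = Pi.single i 1 := by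
  have hnonneg : ∀ i, 0 ≤ y i := fun i => Int.cast_nonneg_iff.mp (hy.1 i)
  have hsum : ∑ i, y i ≤ 1 := by
    have : (∑ i, (y i : ℝ)) ≤ 1 := hy.2
    exact_mod_cast this
  refine or_iff_not_imp_left.mpr fun hy0 => ?_
  obtain ⟨i, hi⟩ := Function.ne_iff.mp hy0
  have hsplit := Finset.add_sum_erase Finset.univ y (Finset.mem_univ i)
  have hrest : 0 ≤ ∑ j ∈ Finset.univ.erase i, y j := Finset.sum_nonneg fun j _ => hnonneg j
  have hi_pos : 0 < y i := (hnonneg i).lt_of_ne' hi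
  refine ⟨i, funext fun j => ?_⟩
  rcases eq_or_ne j i with rfl | hji
  · rw [Pi.single_eq_same]; omega
  · rw [Pi.single_eq_of_ne hji]
    have hrest_zero : ∑ j ∈ Finset.univ.erase i, y j = 0 := by omega
    exact (Finset.sum_eq_zero_iff_of_nonneg fun j _ => hnonneg j).mp hrest_zero j (by simpa)

lemma eq_single_of_intCast_mem_iteratedPyramid [DecidableEq ι] [DecidableEq κ] {C : Set (ι → ℝ)}
    {z : ι ⊕ κ → ℤ} (hz : (Int.cast ∘ z : ι ⊕ κ → ℝ) ∈ iteratedPyramid κ C) :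
    z ∘ Sum.inr = 0 ∨ ∃ i, z = Pi.single (Sum.inr i) 1 := by
  refine (eq_zero_or_eq_single_of_intCast_mem_cornerSimplex hz.1).imp_right ?_
  rintro ⟨i, hi⟩
  have hheight : 1 - ∑ j, (z (Sum.inr j) : ℝ) = 0 := by
    have : ∑ j, z (Sum.inr j) = 1 := by simpa using congrArg (fun y => ∑ j, y j) hi
    rw [sub_eq_zero]
    exact_mod_cast this.symm
  obtain ⟨x, -, hx⟩ := hz.2
  refine ⟨i, funext ?_⟩
  rintro (j | j)
  · have := congrFun hx j
    simpa [hheight] using this.symm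
  · simpa [Pi.single_apply] using congrFun hi j

end Pyramid

section LatticePolytope

variable {ι κ P Z : Type*} [Fintype ι] [AddCommGroup P] [AddCommGroup Z]

/-- Coordinates with respect to a basis of a lattice, regarded as real vectors. -/
noncomputable def realCoords (b : Basis ι ℤ Z) : Z →ₗ[ℤ] (ι → ℝ) :=
  (Algebra.linearMap ℤ ℝ).compLeft ι ∘ₗ b.equivFun.toLinearMap

lemma realCoords_apply (b : Basis ι ℤ Z) (v : Z) : realCoords b v = Int.cast ∘ b.equivFun v := rfl

lemma realCoords_self [DecidableEq ι] (b : Basis ι ℤ Z) (i : ι) :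
    realCoords b (b i) = Pi.single i 1 := by
  ext j
  simp [realCoords_apply, Pi.single_apply, Finsupp.single_apply, eq_comm]

lemma linearCombination_realCoords {E : Type*} [AddCommGroup E] [Module ℝ E] (b : Basis ι ℤ P)
    (ψ : P →ₗ[ℤ] E) (v : P) :
    Fintype.linearCombination ℝ (ψ ∘ b) (realCoords b v) = ψ v := by
  conv_rhs => rw [← b.sum_equivFun v, map_sum]
  simp only [Fintype.linearCombination_apply, realCoords_apply, comp_apply, map_zsmul,
    Int.cast_smul_eq_zsmul]

lemma det_linearCombination_realCoords [DecidableEq ι] (b : Basis ι ℤ Z) (g : ι → Z) :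
    LinearMap.det (Fintype.linearCombination ℝ (realCoords b ∘ g)) = (b.det g : ℝ) := by
  have hmatrix : Fintype.linearCombination ℝ (realCoords b ∘ g) =
      ((b.toMatrix g).map (Int.cast : ℤ → ℝ)).toLin' := LinearMap.pi_ext' fun i => by
    ext j
    simp [realCoords_apply, Basis.toMatrix_apply]
  rw [hmatrix, LinearMap.det_toLin', b.det_apply, Int.cast_det]

lemma span_image_realCoords (b : Basis ι ℤ Z) {A : Set Z} (hA : Submodule.span ℤ A = ⊤) :
    Submodule.span ℝ (realCoords b '' A) = ⊤ := by
  classical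
  have hrange : ∀ z, realCoords b z ∈ Submodule.span ℝ (realCoords b '' A) := fun z => by
    refine Submodule.span_le_restrictScalars ℤ ℝ _ ?_
    rw [Submodule.span_image, hA]
    exact Submodule.mem_map_of_mem Submodule.mem_top
  rw [eq_top_iff, ← (Pi.basisFun ℝ ι).span_eq, Submodule.span_le]
  rintro _ ⟨i, rfl⟩
  rw [Pi.basisFun_apply, ← realCoords_self b]
  exact hrange _

/-- The convex hull of `G ∪ {0}` in the real coordinates given by a basis of the lattice. -/
def latticePolytope (b : Basis ι ℤ Z) (G : Set Z) : Set (ι → ℝ) :=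
  convexHull ℝ (realCoords b '' insert 0 G)

lemma convex_latticePolytope (b : Basis ι ℤ Z) (G : Set Z) : Convex ℝ (latticePolytope b G) :=
  convex_convexHull ℝ _

lemma realCoords_mem_latticePolytope (b : Basis ι ℤ Z) {G : Set Z} {v : Z} (hv : v ∈ G) :
    realCoords b v ∈ latticePolytope b G :=
  subset_convexHull ℝ _ ⟨v, mem_insert_of_mem _ hv, rfl⟩

lemma isCompact_latticePolytope (b : Basis ι ℤ Z) {G : Set Z} (hG : G.Finite) :
    IsCompact (latticePolytope b G) :=
  ((hG.insert 0).image _).isCompact_convexHull (𝕜 := ℝ)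

lemma interior_latticePolytope_nonempty (b : Basis ι ℤ Z) {A : Set Z}
    (hA : Submodule.span ℤ A = ⊤) : (interior (latticePolytope b A)).Nonempty := by
  rw [latticePolytope, interior_convexHull_nonempty_iff_affineSpan_eq_top, image_insert_eq,
    map_zero, ← AffineSubspace.coe_eq_univ_iff, affineSpan_insert_zero, span_image_realCoords b hA,
    Submodule.top_coe]

/-- The normalized volume of `conv (G ∪ {0})` with respect to a lattice with basis `b`: the unit
simplex spanned by `b` has volume `1`. -/
noncomputable def normalizedVolume (b : Basis ι ℤ Z) (G : Set Z) : ℝ≥0∞ :=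
  (Fintype.card ι)! * volume (latticePolytope b G)

lemma normalizedVolume_ne_top (b : Basis ι ℤ Z) {G : Set Z} (hG : G.Finite) :
    normalizedVolume b G ≠ ∞ :=
  ENNReal.mul_ne_top (ENNReal.natCast_ne_top _) (isCompact_latticePolytope b hG).measure_ne_top

lemma normalizedVolume_reindex [Fintype κ] (b : Basis ι ℤ Z) (e : ι ≃ κ) (G : Set Z) :
    normalizedVolume (b.reindex e) G = normalizedVolume b G := by
  let E : (κ → ℝ) →ₗ[ℝ] (ι → ℝ) := (LinearEquiv.funCongrLeft ℝ ℝ e).toLinearMap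
  have hpolytope : latticePolytope b G = E '' latticePolytope (b.reindex e) G := by
    rw [latticePolytope, latticePolytope, LinearMap.image_convexHull, image_image]
    congr! 3 with v
    ext i
    simp [E, realCoords_apply]
  have hE : ⇑E = MeasurableEquiv.piCongrLeft (fun _ => ℝ) e.symm := by
    ext x i
    obtain ⟨j, rfl⟩ := e.symm.surjective i
    rw [MeasurableEquiv.piCongrLeft_apply_apply]
    simp [E]
  rw [normalizedVolume, normalizedVolume, Fintype.card_congr e, hpolytope, hE,
    MeasurableEquiv.image_eq_preimage_symm,
    (volume_measurePreserving_piCongrLeft (fun _ => ℝ) e.symm).symm.measure_preimage_equiv]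

end LatticePolytope

section Rigidity

variable {ι : Type*} [Fintype ι]

lemma eq_of_volume_le_of_isClosed_subset {S K : Set (ι → ℝ)} (hS : IsClosed S) (hSK : S ⊆ K)
    (hK : Convex ℝ K) (hK_int : (interior K).Nonempty) (hS_fin : volume S ≠ ∞)
    (hvol : volume K ≤ volume S) : S = K := by
  have hdiff : volume (K \ S) = 0 := by
    rw [measure_sdiff hSK hS.nullMeasurableSet hS_fin, tsub_eq_zero_of_le hvol]
  have hinterior : interior K \ S = ∅ :=
    (isOpen_interior.sdiff hS).eq_empty_of_measure_zero
      (measure_mono_null (sdiff_subset_sdiff_left interior_subset) hdiff)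
  refine hSK.antisymm ?_
  calc K ⊆ closure K := subset_closure
    _ = closure (interior K) := (hK.closure_interior_eq_closure_of_nonempty_interior hK_int).symm
    _ ⊆ S := closure_minimal (sdiff_eq_empty.mp hinterior) hS

lemma abs_det_eq_one_and_image_eq {T : (ι → ℝ) →ₗ[ℝ] (ι → ℝ)} (hT : 1 ≤ |LinearMap.det T|)
    {S K : Set (ι → ℝ)} (hS : IsCompact S) (hTS : T '' S ⊆ K) (hK : Convex ℝ K)
    (hK_int : (interior K).Nonempty) (hvol : volume K = volume S) :
    |LinearMap.det T| = 1 ∧ T '' S = K := by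
  have himage : volume (T '' S) = ENNReal.ofReal |LinearMap.det T| * volume S :=
    Measure.addHaar_image_linearMap _ _ _
  have hTS_compact : IsCompact (T '' S) := hS.image T.continuous_of_finiteDimensional
  have hle : volume K ≤ volume (T '' S) := by
    rw [himage, hvol]
    exact le_mul_of_one_le_left' (ENNReal.one_le_ofReal.mpr hT)
  have hS_pos : volume S ≠ 0 := hvol ▸ (Measure.measure_pos_of_nonempty_interior volume hK_int).ne'
  refine ⟨le_antisymm (ENNReal.ofReal_le_one.mp ?_) hT,
    eq_of_volume_le_of_isClosed_subset hTS_compact.isClosed hTS hK hK_int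
      hTS_compact.measure_ne_top hle⟩
  rw [← ENNReal.mul_le_mul_iff_left hS_pos hS.measure_ne_top, one_mul, ← himage, ← hvol]
  exact measure_mono hTS

end Rigidity

section LatticePyramid

variable {ι κ n P Z : Type*} [Fintype ι] [Fintype κ] [Fintype n] [AddCommGroup P] [AddCommGroup Z]

lemma linearCombination_image_iteratedPyramid_subset (bP : Basis ι ℤ P)
    (b : Basis (ι ⊕ κ) ℤ Z) (f : P →ₗ[ℤ] Z) {F : Set P} {A : Set Z} (hFA : MapsTo f F A)
    {a : κ → Z} (ha : ∀ i, a i ∈ A) :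
    Fintype.linearCombination ℝ (realCoords b ∘ Sum.elim (f ∘ bP) a) ''
      iteratedPyramid κ (latticePolytope bP F) ⊆ latticePolytope b A := by
  classical
  let T := Fintype.linearCombination ℝ (realCoords b ∘ Sum.elim (f ∘ bP) a)
  let base : (ι → ℝ) →ₗ[ℝ] (ι ⊕ κ → ℝ) :=
    (LinearEquiv.sumArrowLequivProdArrow ι κ ℝ ℝ).symm.toLinearMap ∘ₗ LinearMap.inl ℝ _ _
  have hbase : ∀ v, T (base (realCoords bP v)) = realCoords b (f v) := fun v => by
    simpa [T, base, Fintype.linearCombination_apply] using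
      linearCombination_realCoords bP (realCoords b ∘ₗ f) v
  have hbase_mem : MapsTo (T ∘ base) (latticePolytope bP F) (latticePolytope b A) := by
    rw [mapsTo_iff_image_subset, ← LinearMap.coe_comp, latticePolytope, LinearMap.image_convexHull]
    refine convexHull_mono ?_
    rintro _ ⟨_, ⟨v, hv, rfl⟩, rfl⟩
    refine ⟨f v, ?_, (hbase v).symm⟩
    exact hv.imp (by rintro rfl; exact map_zero f) fun h => hFA h
  rw [image_subset_iff]
  refine iteratedPyramid_subset ((convex_latticePolytope b A).linear_preimage T)
    (fun x hx => hbase_mem hx) fun i => ?_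
  rw [mem_preimage, Fintype.linearCombination_apply_single, one_smul]
  exact realCoords_mem_latticePolytope b (ha i)

lemma isUnit_det_and_image_iteratedPyramid_eq [DecidableEq ι] {k : ℕ} (bP : Basis ι ℤ P)
    (b : Basis (ι ⊕ Fin k) ℤ Z) (f : P →ₗ[ℤ] Z) {F : Set P} (hF : F.Finite) {A : Set Z}
    (hFA : MapsTo f F A) (hA : Submodule.span ℤ A = ⊤)
    {a : Fin k → Z} (ha : ∀ i, a i ∈ A) (hli : LinearIndependent ℤ (Sum.elim (f ∘ bP) a))
    (hvol : normalizedVolume bP F = normalizedVolume b A) :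
    IsUnit (b.det (Sum.elim (f ∘ bP) a)) ∧
      Fintype.linearCombination ℝ (realCoords b ∘ Sum.elim (f ∘ bP) a) ''
        iteratedPyramid (Fin k) (latticePolytope bP F) = latticePolytope b A := by
  have hF_compact := isCompact_latticePolytope bP hF
  have hvol_pyramid :
      volume (latticePolytope b A) = volume (iteratedPyramid (Fin k) (latticePolytope bP F)) := by
    have hfact : ((Fintype.card (ι ⊕ Fin k))! : ℝ≥0∞) ≠ 0 := by positivity
    rw [← ENNReal.mul_right_inj hfact (ENNReal.natCast_ne_top _),
      volume_iteratedPyramid hF_compact]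
    exact hvol.symm
  have hdet : LinearMap.det (Fintype.linearCombination ℝ (realCoords b ∘ Sum.elim (f ∘ bP) a)) =
      b.det (Sum.elim (f ∘ bP) a) := det_linearCombination_realCoords b _
  obtain ⟨hdet_one, himage⟩ := abs_det_eq_one_and_image_eq
    (by
      rw [hdet]
      exact_mod_cast Int.one_le_abs (basis_det_ne_zero_of_linearIndependent b hli))
    (isCompact_iteratedPyramid hF_compact)
    (linearCombination_image_iteratedPyramid_subset bP b f hFA ha)
    (convex_latticePolytope b A) (interior_latticePolytope_nonempty b hA) hvol_pyramid
  refine ⟨Int.isUnit_iff_abs_eq.mpr ?_, himage⟩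
  rw [hdet] at hdet_one
  exact_mod_cast hdet_one

lemma realCoords_mem_of_mem_image_linearCombination (b B : Basis ι ℤ Z)
    {S : Set (ι → ℝ)} {x : Z}
    (hx : realCoords b x ∈ Fintype.linearCombination ℝ (realCoords b ∘ B) '' S) :
    realCoords B x ∈ S := by
  classical
  obtain ⟨s, hs, hsx⟩ := hx
  have hdet : IsUnit (LinearMap.det (Fintype.linearCombination ℝ (realCoords b ∘ B))) := by
    rw [det_linearCombination_realCoords]
    exact (b.isUnit_det B).map (Int.castRingHom ℝ)
  have hinj : Injective (Fintype.linearCombination ℝ (realCoords b ∘ B)) :=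
    fun y z hyz => (LinearMap.equivOfIsUnitDet hdet).injective
      (by simpa only [LinearMap.equivOfIsUnitDet_apply] using hyz)
  rw [← linearCombination_realCoords B (realCoords b)] at hsx
  exact hinj hsx ▸ hs

lemma mem_range_or_eq_of_realCoords_mem_iteratedPyramid {bP : Basis ι ℤ P} {f : P →ₗ[ℤ] Z}
    {B : Basis (ι ⊕ κ) ℤ Z} (hB : ∀ j, B (Sum.inl j) = f (bP j)) {C : Set (ι → ℝ)} {x : Z}
    (hx : realCoords B x ∈ iteratedPyramid κ C) :
    x ∈ LinearMap.range f ∨ ∃ i, x = B (Sum.inr i) := by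
  classical
  refine (eq_single_of_intCast_mem_iteratedPyramid hx).imp (fun hzero => ?_) ?_
  · rw [← B.sum_equivFun x, Fintype.sum_sum_type]
    refine add_mem (sum_mem fun j _ => Submodule.smul_mem _ _ ⟨bP j, (hB j).symm⟩)
      (sum_mem fun i _ => ?_)
    rw [show B.equivFun x (Sum.inr i) = 0 from congrFun hzero i, zero_smul]
    exact zero_mem _
  · rintro ⟨i, hi⟩
    refine ⟨i, B.equivFun.injective (hi.trans (funext fun j => ?_))⟩
    rw [B.equivFun_self, Pi.single_apply]
    simp only [eq_comm]

theorem exists_basis_of_normalizedVolume_eq (bP : Basis ι ℤ P) (bZ : Basis n ℤ Z)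
    {f : P →ₗ[ℤ] Z} (hf : Injective f) {F : Set P} (hF : F.Finite) {A : Set Z}
    (hFA : MapsTo f F A) (hA : Submodule.span ℤ A = ⊤)
    (hvol : normalizedVolume bP F = normalizedVolume bZ A) :
    ∃ (k : ℕ) (B : Basis (ι ⊕ Fin k) ℤ Z), (∀ j, B (Sum.inl j) = f (bP j)) ∧
      (∀ i, B (Sum.inr i) ∈ A) ∧ ∀ x ∈ A, x ∈ LinearMap.range f ∨ ∃ i, x = B (Sum.inr i) := by
  classical
  have : Module.Finite ℤ Z := .of_basis bZ
  have hli_base : LinearIndependent ℤ (f ∘ bP) :=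
    bP.linearIndependent.map' f (LinearMap.ker_eq_bot.mpr hf)
  obtain ⟨k, a, hcard, hli⟩ := exists_linearIndependent_sumElim_of_span_eq_top hli_base
    (v := ((↑) : A → Z)) (by rwa [Subtype.range_coe])
  have e : n ≃ ι ⊕ Fin k := Fintype.equivOfCardEq <| by
    rw [Fintype.card_sum, Fintype.card_fin, hcard, finrank_eq_card_basis bZ]
  rw [← normalizedVolume_reindex bZ e] at hvol
  obtain ⟨hunit, himage⟩ := isUnit_det_and_image_iteratedPyramid_eq bP (bZ.reindex e) f hF hFA hA
    (fun i => (a i).2) hli hvol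
  obtain ⟨-, hspan⟩ := (Basis.is_basis_iff_det _).mpr hunit
  let B : Basis (ι ⊕ Fin k) ℤ Z := .mk hli hspan.ge
  have hB : ⇑B = Sum.elim (f ∘ bP) ((↑) ∘ a) := Basis.coe_mk _ _
  have hB_inl : ∀ j, B (Sum.inl j) = f (bP j) := fun j => by rw [hB]; rfl
  refine ⟨k, B, hB_inl, fun i => by rw [hB]; exact (a i).2, fun x hx => ?_⟩
  refine mem_range_or_eq_of_realCoords_mem_iteratedPyramid hB_inl
    (C := latticePolytope bP F) (realCoords_mem_of_mem_image_linearCombination (bZ.reindex e) B ?_)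
  rw [hB]
  exact himage ▸ realCoords_mem_latticePolytope _ hx

end LatticePyramid

section IteratedPyramid

variable {d : ℕ}

/-- `A` is a pyramid over `F`: it has one point more, and that point raises the rank by one. -/
def IsPyramid (A F : Finset (Fin d → ℤ)) : Prop :=
  F ⊆ A ∧ (A \ F).card = 1 ∧
    finrank ℤ (Submodule.span ℤ (A : Set (Fin d → ℤ))) =
      finrank ℤ (Submodule.span ℤ (F : Set (Fin d → ℤ))) + 1

/-- `A` is an iterated pyramid over `F`, through a chain of prime faces of `A`. The chain is an
infinite sequence of which only the first `t + 1` terms matter. -/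
def IsIteratedPyramid (A F : Finset (Fin d → ℤ)) : Prop :=
  ∃ (t : ℕ) (c : ℕ → Finset (Fin d → ℤ)),
    c 0 = F ∧ c t = A ∧ (∀ i ≤ t, IsPrimeFace A (c i)) ∧ ∀ i < t, IsPyramid (c (i + 1)) (c i)

/-- Functionals `y i` measuring the height of the apexes `a i` over the base `F`: each of them is
positive at its own apex and vanishes on the base and at all other apexes. -/
structure IsHeightSystem {κ M : Type*} [AddCommGroup M] (F : Set M) (a : κ → M)
    (y : κ → M →ₗ[ℤ] ℤ) : Prop where
  apply_base : ∀ i, ∀ x ∈ F, y i x = 0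
  apply_of_ne : ∀ ⦃i j⦄, i ≠ j → y i (a j) = 0
  apply_self_pos : ∀ i, 0 < y i (a i)

namespace IsHeightSystem

lemma sum_apply_base {κ M : Type*} [AddCommGroup M] {F : Set M} {a : κ → M} {y : κ → M →ₗ[ℤ] ℤ}
    (h : IsHeightSystem F a y) (T : Finset κ) {x : M} (hx : x ∈ F) : (∑ i ∈ T, y i) x = 0 := by
  rw [LinearMap.sum_apply]
  exact Finset.sum_eq_zero fun i _ => h.apply_base i x hx

lemma sum_apply_apex {κ M : Type*} [AddCommGroup M] [DecidableEq κ] {F : Set M} {a : κ → M}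
    {y : κ → M →ₗ[ℤ] ℤ} (h : IsHeightSystem F a y) (T : Finset κ) (j : κ) :
    (∑ i ∈ T, y i) (a j) = if j ∈ T then y j (a j) else 0 := by
  rw [LinearMap.sum_apply, ← Finset.sum_ite_eq T j fun i => y i (a j)]
  refine Finset.sum_congr rfl fun i _ => ?_
  split_ifs with hij
  exacts [rfl, h.apply_of_ne (Ne.symm hij)]

variable {κ : Type*} {F : Finset (Fin d → ℤ)} {a : κ → Fin d → ℤ}
  {y : κ → (Fin d → ℤ) →ₗ[ℤ] ℤ}

lemma isPrimeFace_union_image [Fintype κ] (h : IsHeightSystem (F : Set (Fin d → ℤ)) a y)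
    (T : Finset κ) : IsPrimeFace (F ∪ Finset.univ.image a) (F ∪ T.image a) := by
  classical
  have hapex : ∀ j, (∑ i ∈ Tᶜ, y i) (a j) = if j ∈ T then 0 else y j (a j) := fun j => by
    simp only [h.sum_apply_apex, Finset.mem_compl, ite_not]
  refine ⟨Finset.union_subset_union_right (Finset.image_subset_image T.subset_univ),
    ∑ i ∈ Tᶜ, y i, fun x hx => ?_, fun x hx => ⟨fun hxT => ?_, fun hzero => ?_⟩⟩
  · rcases Finset.mem_union.mp hx with hxF | hxa
    · exact (h.sum_apply_base _ hxF).ge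
    · obtain ⟨j, -, rfl⟩ := Finset.mem_image.mp hxa
      rw [hapex]
      split_ifs
      exacts [le_rfl, (h.apply_self_pos j).le]
  · rcases Finset.mem_union.mp hxT with hxF | hxa
    · exact h.sum_apply_base _ hxF
    · obtain ⟨j, hj, rfl⟩ := Finset.mem_image.mp hxa
      rw [hapex, if_pos hj]
  · rcases Finset.mem_union.mp hx with hxF | hxa
    · exact Finset.mem_union_left _ hxF
    · obtain ⟨j, -, rfl⟩ := Finset.mem_image.mp hxa
      refine Finset.mem_union_right _ (Finset.mem_image_of_mem a ?_)
      by_contra hj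
      rw [hapex, if_neg hj] at hzero
      exact (h.apply_self_pos j).ne' hzero

lemma isPyramid_union_image_insert [DecidableEq κ] (h : IsHeightSystem (F : Set (Fin d → ℤ)) a y)
    {T : Finset κ} {l : κ} (hl : l ∉ T) : IsPyramid (F ∪ (insert l T).image a) (F ∪ T.image a) := by
  have hzero : ∀ x ∈ F ∪ T.image a, y l x = 0 := fun x hx => by
    rcases Finset.mem_union.mp hx with hxF | hxa
    · exact h.apply_base l x hxF
    · obtain ⟨j, hj, rfl⟩ := Finset.mem_image.mp hxa
      exact h.apply_of_ne (ne_of_mem_of_not_mem hj hl).symm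
  have hapex : y l (a l) ≠ 0 := (h.apply_self_pos l).ne'
  have hnotMem : a l ∉ F ∪ T.image a := fun hmem => hapex (hzero _ hmem)
  rw [Finset.image_insert, Finset.union_insert]
  refine ⟨Finset.subset_insert _ _, ?_, ?_⟩
  · rw [Finset.insert_sdiff_cancel hnotMem, Finset.card_singleton]
  · rw [Finset.coe_insert]
    exact finrank_span_insert_of_apply_ne_zero (y l) hzero hapex

lemma isIteratedPyramid {k : ℕ} {a : Fin k → Fin d → ℤ} {y : Fin k → (Fin d → ℤ) →ₗ[ℤ] ℤ}
    (h : IsHeightSystem (F : Set (Fin d → ℤ)) a y) :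
    IsIteratedPyramid (F ∪ Finset.univ.image a) F := by
  let initial (i : ℕ) : Finset (Fin k) := {j | j.val < i}
  refine ⟨k, fun i => F ∪ (initial i).image a, by simp [initial], by simp [initial],
    fun i _ => h.isPrimeFace_union_image _, fun i hi => ?_⟩
  have hsucc : initial (i + 1) = insert ⟨i, hi⟩ (initial i) := by
    ext j
    simp only [initial, Finset.mem_filter_univ, Finset.mem_insert, Fin.ext_iff]
    omega
  simp only [hsucc]
  exact h.isPyramid_union_image_insert (by simp [initial])

end IsHeightSystem

lemma exists_isHeightSystem {ι κ M : Type*} [AddCommGroup M] [Module.Free ℤ M] [Module.Finite ℤ M]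
    {N : Submodule ℤ M} (B : Basis (ι ⊕ κ) ℤ N) {F : Set M}
    (hF : F ⊆ Submodule.span ℤ (range fun j => (B (Sum.inl j) : M))) :
    ∃ y, IsHeightSystem F (fun i => (B (Sum.inr i) : M)) y := by
  classical
  choose c hc g hg using fun i => exists_extend_smul N (B.coord (Sum.inr i))
  have happly : ∀ i (x : N), (c i • g i) x = c i * c i * B.coord (Sum.inr i) x := fun i x => by
    rw [LinearMap.smul_apply, hg, smul_eq_mul, smul_eq_mul, mul_assoc]
  refine ⟨fun i => c i • g i, fun i x hx => ?_, fun i j hij => ?_, fun i => ?_⟩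
  · have hker : Submodule.span ℤ (range fun j => (B (Sum.inl j) : M)) ≤
        LinearMap.ker (c i • g i) := by
      rw [Submodule.span_le]
      rintro _ ⟨j, rfl⟩
      simp [happly]
    exact hker (hF hx)
  · simp [happly, hij.symm]
  · simpa [happly] using hc i

lemma simpVol_eq (G : Finset (Fin d → ℤ)) :
    simpVol G = (normalizedVolume (Free.chooseBasis ℤ (Submodule.span ℤ (G : Set (Fin d → ℤ))))
      (Subtype.val ⁻¹' (G : Set (Fin d → ℤ)))).toReal := by
  have hspan : insert 0 (G : Set (Fin d → ℤ)) ⊆ Submodule.span ℤ (G : Set (Fin d → ℤ)) :=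
    insert_subset (zero_mem _) Submodule.subset_span
  rw [normalizedVolume, ENNReal.toReal_mul, ENNReal.toReal_natCast,
    ← finrank_eq_card_chooseBasisIndex, simpVol]
  congr 4
  ext x
  constructor
  · rintro ⟨v, hv, rfl⟩
    refine ⟨⟨v, hspan hv⟩, hv.imp_left Subtype.ext, ?_⟩
    simp only [dif_pos (SetLike.mem_coe.mp (hspan hv))]
    rfl
  · rintro ⟨v, hv, rfl⟩
    refine ⟨v, hv.imp_left (congrArg Subtype.val), ?_⟩
    simp only [dif_pos v.2]
    rfl

lemma exists_basis_span_of_simpVol_eq {A F : Finset (Fin d → ℤ)} (hFA : F ⊆ A)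
    (hvol : simpVol F = simpVol A) :
    ∃ (ι : Type) (k : ℕ) (B : Basis (ι ⊕ Fin k) ℤ (Submodule.span ℤ (A : Set (Fin d → ℤ)))),
      Submodule.span ℤ (range fun j => (B (Sum.inl j) : Fin d → ℤ)) = Submodule.span ℤ F ∧
      (∀ i, (B (Sum.inr i) : Fin d → ℤ) ∈ A) ∧
      ∀ x ∈ A, x ∈ Submodule.span ℤ (F : Set (Fin d → ℤ)) ∨ ∃ i, B (Sum.inr i) = x := by
  let P := Submodule.span ℤ (F : Set (Fin d → ℤ))
  let Z := Submodule.span ℤ (A : Set (Fin d → ℤ))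
  have hfin (G : Finset (Fin d → ℤ)) (N : Submodule ℤ (Fin d → ℤ)) :
      (Subtype.val ⁻¹' (G : Set (Fin d → ℤ)) : Set N).Finite :=
    G.finite_toSet.preimage Subtype.val_injective.injOn
  rw [simpVol_eq, simpVol_eq, ENNReal.toReal_eq_toReal_iff' (normalizedVolume_ne_top _ (hfin _ _))
    (normalizedVolume_ne_top _ (hfin _ _))] at hvol
  obtain ⟨k, B, hB_base, hB_apex, hA⟩ := exists_basis_of_normalizedVolume_eq
    (f := Submodule.inclusion (Submodule.span_mono hFA : P ≤ Z)) _ _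
    (Submodule.inclusion_injective _) (hfin _ _) (fun x hx => hFA hx)
    Submodule.span_span_coe_preimage hvol
  refine ⟨_, k, B, ?_, hB_apex, fun x hx => ?_⟩
  · have hbase : (fun j => (B (Sum.inl j) : Fin d → ℤ)) = P.subtype ∘ Free.chooseBasis ℤ P :=
      funext fun j => congrArg Subtype.val (hB_base j)
    rw [hbase, range_comp, Submodule.span_image, Basis.span_eq, Submodule.map_subtype_top]
  · refine (hA ⟨x, Submodule.subset_span hx⟩ hx).imp ?_ ?_
    · rintro ⟨v, hv⟩
      have hvx : (v : Fin d → ℤ) = x := congrArg Subtype.val hv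
      exact hvx ▸ v.2
    · rintro ⟨i, hi⟩
      exact ⟨i, congrArg Subtype.val hi.symm⟩

end IteratedPyramid

theorem iterated_pyramid_of_eq_simpVol_general {d : ℕ} (A F : Finset (Fin d → ℤ)) (hFA : F ⊆ A)
    (hsat : ∀ x ∈ A, x ∈ Submodule.span ℤ (F : Set (Fin d → ℤ)) → x ∈ F)
    (hvol : simpVol F = simpVol A) : IsIteratedPyramid A F := by
  obtain ⟨ι, k, B, hbase, hapex, hA⟩ := exists_basis_span_of_simpVol_eq hFA hvol
  obtain ⟨y, hy⟩ := exists_isHeightSystem B (F := F) (hbase ▸ Submodule.subset_span)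
  have hA_eq : A = F ∪ Finset.univ.image fun i => (B (Sum.inr i) : Fin d → ℤ) := by
    refine subset_antisymm (fun x hx => Finset.mem_union.mpr ?_)
      (Finset.union_subset hFA (Finset.image_subset_iff.mpr fun i _ => hapex i))
    exact (hA x hx).imp (hsat x hx) fun ⟨i, hi⟩ => Finset.mem_image.mpr ⟨i, Finset.mem_univ i, hi⟩
  rw [hA_eq]
  exact hy.isIteratedPyramid

/-- if `A ⊆ ℤ^d` is finite and pointed with `ℤA = ℤ^d`, `F` is a prime face
of `A`, and the simplicial volume of `F` in `ℤF` equals the simplicial volume of `A` in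
`ℤ^d`, then `A` is an iterated pyramid over `F`: there is a chain of prime faces
`F = F_0 ⊆ F_1 ⊆ ⋯ ⊆ F_t = A` with `|F_{i+1} ∖ F_i| = 1` and
`rank ℤF_{i+1} = rank ℤF_i + 1` for all `i`. -/
theorem iterated_pyramid_of_eq_simpVol {d : ℕ} (A F : Finset (Fin d → ℤ))
    (hpointed : ∀ v ∈ AddSubmonoid.closure (A : Set (Fin d → ℤ)),
      -v ∈ AddSubmonoid.closure (A : Set (Fin d → ℤ)) → v = 0)
    (hZA : Submodule.span ℤ (A : Set (Fin d → ℤ)) = ⊤)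
    (hface : IsPrimeFace A F)
    (hvol : simpVol F = simpVol A) :
    ∃ (t : ℕ) (c : ℕ → Finset (Fin d → ℤ)),
      c 0 = F ∧ c t = A ∧ (∀ i ≤ t, IsPrimeFace A (c i)) ∧
      ∀ i < t, c i ⊆ c (i + 1) ∧ (c (i + 1) \ c i).card = 1 ∧
        Module.finrank ℤ (Submodule.span ℤ ((c (i + 1) : Set (Fin d → ℤ)))) =
          Module.finrank ℤ (Submodule.span ℤ ((c i : Set (Fin d → ℤ)))) + 1 := by
  obtain ⟨hFA, ℓ, -, hℓ⟩ := hface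
  refine iterated_pyramid_of_eq_simpVol_general A F hFA (fun x hxA hx => (hℓ x hxA).mpr ?_) hvol
  exact (Submodule.span_le.mpr fun y hy => (hℓ y (hFA hy)).mp hy : _ ≤ LinearMap.ker ℓ) hx
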